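/- If d = 2, then for each r ∈ ℤ², r ≠ 0, one has the expansion G_λ(0, 0) - G_λ(0, r) = ρ_2(r)/a + γ̃_2(r) λ ln λ + o(λ ln λ) as λ → 0+. -/

import Mathlib

open MeasureTheory Real Filter Topology Asymptotics

/-- Fourier symbol `φ(θ) = ∑_z a(z) cos⟨z,θ⟩` of the random walk on `ℤ^d`. -/
noncomputable def phiSymb (d : ℕ) (a : (Fin d → ℤ) → ℝ) (θ : Fin d → ℝ) : ℝ :=
  ∑' z : Fin d → ℤ, a z * Real.cos (∑ i, (z i : ℝ) * θ i)

/-- Transition probability `p(t;x,y) = (2π)^{-d} ∫_{[-π,π]^d} e^{φ(θ)t} cos⟨θ,y-x⟩ dθ`. -/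
noncomputable def ptrans (d : ℕ) (a : (Fin d → ℤ) → ℝ) (t : ℝ) (x y : Fin d → ℤ) : ℝ :=
  ((2 * π) ^ d)⁻¹ *
    ∫ θ in Set.Icc (fun _ : Fin d => -π) (fun _ : Fin d => π),
      Real.exp (phiSymb d a θ * t) * Real.cos (∑ i, θ i * ((y i : ℝ) - (x i : ℝ)))

/-- Laplace transform `G_λ(x,y) = ∫_0^∞ e^{-λt} p(t;x,y) dt` (Green's function at `λ = 0`). -/
noncomputable def Glam (d : ℕ) (a : (Fin d → ℤ) → ℝ) (lam : ℝ) (x y : Fin d → ℤ) : ℝ :=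
  ∫ t in Set.Ioi (0 : ℝ), Real.exp (-lam * t) * ptrans d a t x y

/-- Hessian matrix `φ''(0)`, with entries `-∑_z a(z) z_i z_j`. -/
noncomputable def hessPhi (d : ℕ) (a : (Fin d → ℤ) → ℝ) : Matrix (Fin d) (Fin d) ℝ :=
  Matrix.of fun i j => -∑' z : Fin d → ℤ, a z * (z i : ℝ) * (z j : ℝ)

/-- `γ_d = (2π)^{-d/2} |det φ''(0)|^{-1/2}`. -/
noncomputable def gammaConst (d : ℕ) (a : (Fin d → ℤ) → ℝ) : ℝ :=
  ((2 * π) ^ ((d : ℝ) / 2))⁻¹ * (Real.sqrt |(hessPhi d a).det|)⁻¹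

/-- `ρ_d(x) = (a/(2π)^d) ∫_{[-π,π]^d} (cos⟨x,θ⟩ - 1)/φ(θ) dθ` for `x ≠ 0`, and `ρ_d(0) = 1`. -/
noncomputable def rhoConst (d : ℕ) (a : (Fin d → ℤ) → ℝ) (x : Fin d → ℤ) : ℝ :=
  if x = 0 then 1 else
    (-(a 0) / (2 * π) ^ d) *
      ∫ θ in Set.Icc (fun _ : Fin d => -π) (fun _ : Fin d => π),
        (Real.cos (∑ i, (x i : ℝ) * θ i) - 1) / phiSymb d a θ

/-- `γ̃_d(z) = (1/(2(2π)^d)) ∫_{ℝ^d} ⟨v,z⟩² e^{⟨φ''(0)v,v⟩/2} dv`. -/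
noncomputable def gammaTilde (d : ℕ) (a : (Fin d → ℤ) → ℝ) (z : Fin d → ℤ) : ℝ :=
  (2 * (2 * π) ^ d)⁻¹ *
    ∫ v : Fin d → ℝ, (∑ i, v i * (z i : ℝ)) ^ 2 *
      Real.exp ((∑ i, (hessPhi d a).mulVec v i * v i) / 2)

/-!
Write `q t = p(t; 0, 0) - p(t; 0, r)`, a Fourier integral of `e^{tφ(θ)} (1 - cos⟨r,θ⟩)`. By Tonelli
its integral over `(0, ∞)` is `ρ₂(r)/a`, so `G_λ(0, 0) - G_λ(0, r)` falls short of `ρ₂(r)/a` by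
`∫_0^∞ (1 - e^{-λt}) q t dt`. Rescaling `θ = v/√t` in the Fourier integral gives `t² q t → γ̃₂(r)`,
so that replacing `q` by `γ̃₂(r) t⁻²` on `(1, ∞)` and by `0` on `(0, 1]` changes the correction by
`o(λ ln λ)` only. Finally `1 - e^{-λt}` is close to `λt` up to `t = 1/λ` and bounded beyond, whence
`∫_1^∞ (1 - e^{-λt}) t⁻² dt = -λ ln λ + O(λ)`.
-/

section Abelian

open Set

theorem one_sub_exp_neg_mul_mem_Icc {x t : ℝ} (hx : 0 ≤ x) (ht : 0 ≤ t) :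
    1 - rexp (-x * t) ∈ Icc 0 1 := by
  have hexp : rexp (-x * t) ≤ 1 := exp_le_one_iff.2 (by nlinarith)
  constructor <;> linarith [exp_pos (-x * t)]

theorem integrableOn_one_sub_exp_mul {q : ℝ → ℝ} {s : Set ℝ} (hs : MeasurableSet s)
    (hs0 : s ⊆ Ioi 0) (hq : IntegrableOn q s) {lam : ℝ} (hlam : 0 ≤ lam) :
    IntegrableOn (fun t => (1 - rexp (-lam * t)) * q t) s := by
  refine hq.bdd_mul (c := 1) (by fun_prop) ?_
  filter_upwards [ae_restrict_mem hs] with t ht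
  obtain ⟨h0, h1⟩ := one_sub_exp_neg_mul_mem_Icc hlam (hs0 ht).le
  rwa [norm_of_nonneg h0]

theorem integrableOn_Ioi_inv_sq {c : ℝ} (hc : 0 < c) :
    IntegrableOn (fun t : ℝ => (t ^ 2)⁻¹) (Ioi c) := by
  simpa [rpow_neg_ofNat, zpow_neg] using integrableOn_Ioi_rpow_of_lt (a := -2) (by norm_num) hc

theorem integral_Ioi_inv_sq {c : ℝ} (hc : 0 < c) : ∫ t in Ioi c, (t ^ 2)⁻¹ = c⁻¹ := by
  have h := integral_Ioi_rpow_of_lt (a := -2) (by norm_num) hc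
  norm_num [rpow_neg_ofNat, zpow_neg, rpow_neg_one] at h
  exact h

theorem abs_one_sub_exp_mul_inv_sq_sub_mul_inv_le {lam t : ℝ} (hlam : 0 ≤ lam) (ht : 0 < t)
    (hlt : lam * t ≤ 1) :
    |(1 - rexp (-lam * t)) * (t ^ 2)⁻¹ - lam * t⁻¹| ≤ lam ^ 2 := by
  have htaylor := abs_exp_sub_one_sub_id_le (x := -lam * t)
    (by rwa [neg_mul, abs_neg, abs_of_nonneg (by positivity)])
  have hfactor : (1 - rexp (-lam * t)) * (t ^ 2)⁻¹ - lam * t⁻¹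
      = -(rexp (-lam * t) - 1 - -lam * t) * (t ^ 2)⁻¹ := by
    field_simp
    ring
  rw [hfactor, abs_mul, abs_neg, abs_inv, abs_of_nonneg (sq_nonneg t), ← div_eq_mul_inv,
    div_le_iff₀ (by positivity)]
  exact htaylor.trans_eq (by ring)

theorem abs_integral_one_sub_exp_mul_inv_sq_sub_mul_log_le {lam : ℝ} (h0 : 0 < lam)
    (h1 : lam ≤ 1) :
    |(∫ t in (1 : ℝ)..lam⁻¹, (1 - rexp (-lam * t)) * (t ^ 2)⁻¹) - lam * log lam⁻¹| ≤ lam := by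
  have hle : 1 ≤ lam⁻¹ := (one_le_inv₀ h0).2 h1
  have hmem : (0 : ℝ) ∉ uIcc 1 lam⁻¹ := by
    rw [uIcc_of_le hle]
    exact fun h => absurd h.1 (by norm_num)
  have hpos : ∀ t ∈ uIcc 1 lam⁻¹, t ≠ 0 := fun t ht h => hmem (h ▸ ht)
  have hlog : lam * log lam⁻¹ = ∫ t in (1 : ℝ)..lam⁻¹, lam * t⁻¹ := by
    rw [intervalIntegral.integral_const_mul, integral_inv hmem, div_one]
  have hint₁ : IntervalIntegrable (fun t => (1 - rexp (-lam * t)) * (t ^ 2)⁻¹) volume 1 lam⁻¹ :=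
    ContinuousOn.intervalIntegrable <| .mul (by fun_prop) <|
      .inv₀ (by fun_prop) fun t ht => pow_ne_zero 2 (hpos t ht)
  have hint₂ : IntervalIntegrable (fun t : ℝ => lam * t⁻¹) volume 1 lam⁻¹ :=
    ContinuousOn.intervalIntegrable <| .mul (by fun_prop) <| .inv₀ (by fun_prop) hpos
  rw [hlog, ← intervalIntegral.integral_sub hint₁ hint₂]
  have hbound : ∀ t ∈ uIoc 1 lam⁻¹,
      ‖(1 - rexp (-lam * t)) * (t ^ 2)⁻¹ - lam * t⁻¹‖ ≤ lam ^ 2 := fun t ht => by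
    rw [uIoc_of_le hle] at ht
    refine abs_one_sub_exp_mul_inv_sq_sub_mul_inv_le h0.le (one_pos.trans ht.1) ?_
    simpa [h0.ne'] using mul_le_mul_of_nonneg_left ht.2 h0.le
  calc _ ≤ lam ^ 2 * |lam⁻¹ - 1| := intervalIntegral.norm_integral_le_of_norm_le_const hbound
    _ = lam - lam ^ 2 := by
      rw [abs_of_nonneg (by linarith)]
      field_simp
    _ ≤ lam := by linarith [sq_nonneg lam]

theorem abs_integral_Ioi_one_sub_exp_mul_inv_sq_add_mul_log_le {lam : ℝ} (h0 : 0 < lam)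
    (h1 : lam ≤ 1) :
    |(∫ t in Ioi 1, (1 - rexp (-lam * t)) * (t ^ 2)⁻¹) + lam * log lam| ≤ 2 * lam := by
  have hinv : 0 < lam⁻¹ := inv_pos.2 h0
  have hint : ∀ c > 0, IntegrableOn (fun t => (1 - rexp (-lam * t)) * (t ^ 2)⁻¹) (Ioi c) :=
    fun c hc => integrableOn_one_sub_exp_mul measurableSet_Ioi (Ioi_subset_Ioi hc.le)
      (integrableOn_Ioi_inv_sq hc) h0.le
  have htail : |∫ t in Ioi lam⁻¹, (1 - rexp (-lam * t)) * (t ^ 2)⁻¹| ≤ lam := by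
    rw [← norm_eq_abs]
    refine (norm_integral_le_of_norm_le (integrableOn_Ioi_inv_sq hinv) ?_).trans_eq
      ((integral_Ioi_inv_sq hinv).trans (inv_inv lam))
    filter_upwards [ae_restrict_mem measurableSet_Ioi] with t ht
    obtain ⟨hk0, hk1⟩ := one_sub_exp_neg_mul_mem_Icc h0.le (hinv.trans ht).le
    rw [norm_of_nonneg (by positivity)]
    exact mul_le_of_le_one_left (by positivity) hk1
  have hmain := abs_integral_one_sub_exp_mul_inv_sq_sub_mul_log_le h0 h1
  rw [log_inv, mul_neg, sub_neg_eq_add] at hmain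
  rw [← intervalIntegral.integral_interval_add_Ioi (hint 1 one_pos) (hint _ hinv), add_right_comm,
    two_mul]
  exact (abs_add_le _ _).trans (add_le_add hmain htail)

theorem isLittleO_id_mul_log : (fun x : ℝ => x) =o[𝓝[>] 0] fun x => x * log x := by
  have h : (fun _ : ℝ => (1 : ℝ)) =o[𝓝[>] 0] log :=
    (isLittleO_const_left_of_ne one_ne_zero).2 <|
      tendsto_abs_atBot_atTop.comp tendsto_log_nhdsGT_zero
  simpa using (isBigO_refl (fun x : ℝ => x) (𝓝[>] 0)).mul_isLittleO h

theorem abs_integral_Ioc_one_sub_exp_mul_le {p : ℝ → ℝ} {T lam : ℝ}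
    (hp : IntegrableOn p (Ioc 0 T)) (hlam : 0 ≤ lam) :
    |∫ t in Ioc 0 T, (1 - rexp (-lam * t)) * p t| ≤ lam * (T * ∫ t in Ioc 0 T, |p t|) := by
  rw [← mul_assoc, ← integral_const_mul, ← norm_eq_abs]
  refine norm_integral_le_of_norm_le (hp.abs.const_mul _) ?_
  filter_upwards [ae_restrict_mem measurableSet_Ioc] with t ht
  obtain ⟨hk, -⟩ := one_sub_exp_neg_mul_mem_Icc hlam ht.1.le
  rw [norm_mul, norm_of_nonneg hk]
  have hexp := one_sub_le_exp_neg (lam * t)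
  have hlt := mul_le_mul_of_nonneg_left ht.2 hlam
  rw [← neg_mul] at hexp
  exact mul_le_mul_of_nonneg_right (by linarith) (norm_nonneg _)

theorem abs_integral_Ioi_one_sub_exp_mul_le {p : ℝ → ℝ} {ε T lam : ℝ} (hT : 1 ≤ T)
    (hp : ∀ t ≥ T, |p t| ≤ ε * (t ^ 2)⁻¹) (hlam : 0 ≤ lam) :
    |∫ t in Ioi T, (1 - rexp (-lam * t)) * p t|
      ≤ ε * ∫ t in Ioi 1, (1 - rexp (-lam * t)) * (t ^ 2)⁻¹ := by
  have hε : 0 ≤ ε :=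
    nonneg_of_mul_nonneg_left ((abs_nonneg _).trans (hp T le_rfl)) (by positivity)
  have hint : IntegrableOn (fun t => (1 - rexp (-lam * t)) * (t ^ 2)⁻¹) (Ioi 1) :=
    integrableOn_one_sub_exp_mul measurableSet_Ioi (Ioi_subset_Ioi zero_le_one)
      (integrableOn_Ioi_inv_sq one_pos) hlam
  have hk : ∀ t ≥ 1, 0 ≤ 1 - rexp (-lam * t) := fun t ht =>
    (one_sub_exp_neg_mul_mem_Icc hlam (zero_le_one.trans ht)).1
  calc |∫ t in Ioi T, (1 - rexp (-lam * t)) * p t|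
      ≤ ∫ t in Ioi T, ε * ((1 - rexp (-lam * t)) * (t ^ 2)⁻¹) := by
        rw [← norm_eq_abs]
        refine norm_integral_le_of_norm_le ((hint.mono_set (Ioi_subset_Ioi hT)).const_mul ε) ?_
        filter_upwards [ae_restrict_mem measurableSet_Ioi] with t ht
        have hkt := hk t (hT.trans ht.le)
        rw [norm_mul, norm_of_nonneg hkt, mul_left_comm]
        exact mul_le_mul_of_nonneg_left (hp t ht.le) hkt
    _ = ε * ∫ t in Ioi T, (1 - rexp (-lam * t)) * (t ^ 2)⁻¹ := integral_const_mul _ _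
    _ ≤ _ := by
        refine mul_le_mul_of_nonneg_left (setIntegral_mono_set hint ?_
          (Ioi_subset_Ioi hT).eventuallyLE) hε
        filter_upwards [ae_restrict_mem measurableSet_Ioi] with t ht
        exact mul_nonneg (hk t ht.le) (by positivity)

theorem isLittleO_integral_one_sub_exp_mul {p : ℝ → ℝ} (hp : IntegrableOn p (Ioi 0))
    (hp_top : p =o[atTop] fun t => (t ^ 2)⁻¹) :
    (fun lam : ℝ => ∫ t in Ioi 0, (1 - rexp (-lam * t)) * p t)
      =o[𝓝[>] 0] fun lam => lam * log lam := by
  refine isLittleO_iff.2 fun ε hε => ?_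
  obtain ⟨T, hT⟩ := eventually_atTop.1
    ((hp_top.bound (show 0 < ε / 4 by positivity)).and (eventually_ge_atTop 1))
  have hT1 : 1 ≤ T := (hT T le_rfl).2
  have hpT : ∀ t ≥ T, |p t| ≤ ε / 4 * (t ^ 2)⁻¹ := fun t ht => by
    simpa using (hT t ht).1
  have hp_Ioc : IntegrableOn p (Ioc 0 T) := hp.mono_set Ioc_subset_Ioi_self
  have hlog₁ := isLittleO_id_mul_log.bound (show (0 : ℝ) < 1 / 2 by norm_num)
  have hlog₂ := (isLittleO_id_mul_log.const_mul_left (T * ∫ t in Ioc 0 T, |p t|)).bound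
    (half_pos hε)
  filter_upwards [hlog₁, hlog₂, Ioo_mem_nhdsGT one_pos] with lam hl₁ hl₂ ⟨hlam, hlam1⟩
  have hk := integrableOn_one_sub_exp_mul measurableSet_Ioi subset_rfl hp hlam.le
  have hhead := abs_integral_Ioc_one_sub_exp_mul_le hp_Ioc hlam.le
  have htail := abs_integral_Ioi_one_sub_exp_mul_le hT1 hpT hlam.le
  have hmodel : ∫ t in Ioi 1, (1 - rexp (-lam * t)) * (t ^ 2)⁻¹ ≤ 2 * |lam * log lam| := by
    have := abs_le.1 (abs_integral_Ioi_one_sub_exp_mul_inv_sq_add_mul_log_le hlam hlam1.le)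
    rw [norm_of_nonneg hlam.le, norm_eq_abs] at hl₁
    linarith [neg_abs_le (lam * log lam)]
  rw [← Ioc_union_Ioi_eq_Ioi (zero_le_one.trans hT1), setIntegral_union (Ioc_disjoint_Ioi le_rfl)
    measurableSet_Ioi (hk.mono_set Ioc_subset_Ioi_self)
    (hk.mono_set (Ioi_subset_Ioi (zero_le_one.trans hT1)))]
  refine (norm_add_le _ _).trans ?_
  rw [norm_eq_abs, norm_eq_abs] at hl₂ ⊢
  rw [norm_eq_abs]
  have := mul_le_mul_of_nonneg_left hmodel (show 0 ≤ ε / 4 by positivity)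
  linarith [le_abs_self ((T * ∫ t in Ioc 0 T, |p t|) * lam)]

theorem isLittleO_sub_indicator_inv_sq {q : ℝ → ℝ} {γ : ℝ}
    (hγ : Tendsto (fun t => t ^ 2 * q t) atTop (𝓝 γ)) :
    (fun t => q t - (Ioi 1).indicator (fun t => γ * (t ^ 2)⁻¹) t)
      =o[atTop] fun t : ℝ => (t ^ 2)⁻¹ := by
  refine (isLittleO_iff_tendsto' ?_).2 ((sub_self γ ▸ hγ.sub_const γ).congr' ?_)
  · filter_upwards [eventually_gt_atTop 0] with t ht h
    exact absurd h (by positivity)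
  · filter_upwards [eventually_gt_atTop 1] with t ht
    have ht0 : t ≠ 0 := (one_pos.trans ht).ne'
    rw [indicator_of_mem (mem_Ioi.2 ht)]
    field_simp

theorem setIntegral_Ioi_zero_mul_indicator_Ioi_one (k f : ℝ → ℝ) :
    ∫ t in Ioi 0, k t * (Ioi 1).indicator f t = ∫ t in Ioi 1, k t * f t := by
  simp only [← indicator_mul_right]
  rw [setIntegral_indicator measurableSet_Ioi, inter_eq_right.2 (Ioi_subset_Ioi zero_le_one)]

theorem isLittleO_integral_one_sub_exp_mul_add {q : ℝ → ℝ} {γ : ℝ} (hq : IntegrableOn q (Ioi 0))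
    (hγ : Tendsto (fun t => t ^ 2 * q t) atTop (𝓝 γ)) :
    (fun lam : ℝ => (∫ t in Ioi 0, (1 - rexp (-lam * t)) * q t) + γ * (lam * log lam))
      =o[𝓝[>] 0] fun lam => lam * log lam := by
  set tail : ℝ → ℝ := (Ioi 1).indicator fun t => γ * (t ^ 2)⁻¹
  have htail : IntegrableOn tail (Ioi 0) :=
    ((integrable_indicator_iff measurableSet_Ioi).2
      ((integrableOn_Ioi_inv_sq one_pos).const_mul γ)).integrableOn
  have hrem : (fun lam : ℝ => ∫ t in Ioi 0, (1 - rexp (-lam * t)) * (q t - tail t))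
      =o[𝓝[>] 0] fun lam => lam * log lam :=
    isLittleO_integral_one_sub_exp_mul (p := fun t => q t - tail t) (hq.sub htail)
      (isLittleO_sub_indicator_inv_sq hγ)
  have hmodel : (fun lam : ℝ => γ *
      ((∫ t in Ioi 1, (1 - rexp (-lam * t)) * (t ^ 2)⁻¹) + lam * log lam))
      =o[𝓝[>] 0] fun lam => lam * log lam := by
    refine (IsBigO.trans_isLittleO (.of_bound 2 ?_) isLittleO_id_mul_log).const_mul_left γ
    filter_upwards [Ioo_mem_nhdsGT one_pos] with lam ⟨hlam, hlam1⟩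
    rw [norm_of_nonneg hlam.le]
    exact abs_integral_Ioi_one_sub_exp_mul_inv_sq_add_mul_log_le hlam hlam1.le
  refine (hrem.add hmodel).congr' ?_ (EventuallyEq.refl _ _)
  filter_upwards [self_mem_nhdsWithin] with lam hlam
  have hk {p : ℝ → ℝ} (hp : IntegrableOn p (Ioi 0)) :
      IntegrableOn (fun t => (1 - rexp (-lam * t)) * p t) (Ioi 0) :=
    integrableOn_one_sub_exp_mul measurableSet_Ioi subset_rfl hp (le_of_lt hlam)
  have hsub : ∫ t in Ioi 0, (1 - rexp (-lam * t)) * (q t - tail t)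
      = (∫ t in Ioi 0, (1 - rexp (-lam * t)) * q t)
        - γ * ∫ t in Ioi 1, (1 - rexp (-lam * t)) * (t ^ 2)⁻¹ := by
    simp only [mul_sub]
    rw [integral_sub (hk hq) (hk htail), setIntegral_Ioi_zero_mul_indicator_Ioi_one]
    simp only [mul_left_comm _ γ, integral_const_mul]
  rw [hsub]
  ring

end Abelian

section Laplace

variable {E : Type*} [NormedAddCommGroup E] [NormedSpace ℝ E]

theorem norm_indicator_exp_mul_inv_sqrt_smul_le {S : Set E} {φ g : E → ℝ}
    {c M : ℝ} (hφ : ∀ θ ∈ S, c * ‖θ‖ ^ 2 ≤ -φ θ) (hg : ∀ θ ∈ S, |g θ| ≤ M * ‖θ‖ ^ 2)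
    {t : ℝ} (ht : 0 < t) (v : E) :
    ‖S.indicator (fun θ => rexp (t * φ θ) * (t * g θ)) ((√t)⁻¹ • v)‖
      ≤ |M| * (‖v‖ ^ 2 * rexp (-c * ‖v‖ ^ 2)) := by
  have hscale : ‖v‖ ^ 2 = t * ‖(√t)⁻¹ • v‖ ^ 2 := by
    rw [norm_smul, mul_pow, norm_inv, norm_of_nonneg (sqrt_nonneg t), inv_pow, sq_sqrt ht.le,
      mul_inv_cancel_left₀ ht.ne']
  rw [hscale]
  generalize (√t)⁻¹ • v = θ
  by_cases hθ : θ ∈ S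
  · have hexp : rexp (t * φ θ) ≤ rexp (-c * (t * ‖θ‖ ^ 2)) :=
      exp_le_exp.2 (by nlinarith [hφ θ hθ])
    have hgθ : |g θ| ≤ |M| * ‖θ‖ ^ 2 :=
      (hg θ hθ).trans (mul_le_mul_of_nonneg_right (le_abs_self M) (by positivity))
    rw [Set.indicator_of_mem hθ, norm_eq_abs, abs_mul, abs_exp, abs_mul, abs_of_pos ht]
    calc _ ≤ rexp (-c * (t * ‖θ‖ ^ 2)) * (t * (|M| * ‖θ‖ ^ 2)) := by gcongr
      _ = _ := by ring
  · rw [Set.indicator_of_notMem hθ, norm_zero]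
    positivity

variable [FiniteDimensional ℝ E] [MeasurableSpace E] [BorelSpace E] (μ : Measure E)
  [μ.IsAddHaarMeasure]

theorem integrable_norm_sq_mul_exp_neg_mul_norm_sq {c : ℝ} (hc : 0 < c) :
    Integrable (fun v : E => ‖v‖ ^ 2 * rexp (-c * ‖v‖ ^ 2)) μ := by
  rcases subsingleton_or_nontrivial E with hE | hE
  · simp [Subsingleton.elim _ (0 : E)]
  · refine (integrable_fun_norm_addHaar μ (f := fun y => y ^ 2 * rexp (-c * y ^ 2))).2 ?_
    have h := integrableOn_rpow_mul_exp_neg_mul_sq hc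
      (neg_one_lt_zero.trans_le (Nat.cast_nonneg (Module.finrank ℝ E - 1 + 2)))
    simpa only [rpow_natCast, pow_add, mul_assoc, smul_eq_mul] using h

theorem sqrt_pow_mul_mul_setIntegral_exp_mul {S : Set E} (hS : MeasurableSet S)
    (φ g : E → ℝ) {t : ℝ} (ht : 0 < t) :
    √t ^ Module.finrank ℝ E * t * ∫ θ in S, rexp (φ θ * t) * g θ ∂μ
      = ∫ v, S.indicator (fun θ => rexp (t * φ θ) * (t * g θ)) ((√t)⁻¹ • v) ∂μ := by
  rw [Measure.integral_comp_smul, inv_pow, inv_inv, abs_of_nonneg (by positivity),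
    integral_indicator hS, smul_eq_mul, mul_assoc, ← integral_const_mul]
  simp only [mul_comm t (φ _), mul_left_comm t]

/-- Only the quadratic behaviour of `φ` and `g` at the origin survives the rescaling
`θ = v / √t`; away from the origin coercivity of `-φ` supplies a Gaussian majorant. -/
theorem tendsto_sqrt_pow_mul_mul_setIntegral_exp_mul {S : Set E} (hS : MeasurableSet S)
    (hS0 : S ∈ 𝓝 0) {φ g Q G : E → ℝ} (hφ : Measurable φ) (hg : Measurable g) {c M : ℝ} (hc : 0 < c)
    (hφ_le : ∀ θ ∈ S, c * ‖θ‖ ^ 2 ≤ -φ θ) (hg_le : ∀ θ ∈ S, |g θ| ≤ M * ‖θ‖ ^ 2)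
    (hQ : ∀ v, Tendsto (fun t : ℝ => t * φ ((√t)⁻¹ • v)) atTop (𝓝 (Q v)))
    (hG : ∀ v, Tendsto (fun t : ℝ => t * g ((√t)⁻¹ • v)) atTop (𝓝 (G v))) :
    Tendsto (fun t => √t ^ Module.finrank ℝ E * t * ∫ θ in S, rexp (φ θ * t) * g θ ∂μ) atTop
      (𝓝 (∫ v, rexp (Q v) * G v ∂μ)) := by
  have hlim : ∀ v, Tendsto
      (fun t : ℝ => S.indicator (fun θ => rexp (t * φ θ) * (t * g θ)) ((√t)⁻¹ • v)) atTop
      (𝓝 (rexp (Q v) * G v)) := by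
    intro v
    have hzero : Tendsto (fun t : ℝ => (√t)⁻¹ • v) atTop (𝓝 0) := by
      simpa using (tendsto_inv_atTop_zero.comp tendsto_sqrt_atTop).smul_const v
    refine (((continuous_exp.tendsto _).comp (hQ v)).mul (hG v)).congr' ?_
    filter_upwards [hzero.eventually_mem hS0] with t ht
    rw [Set.indicator_of_mem ht, Function.comp_apply]
  refine (tendsto_integral_filter_of_dominated_convergence _ (.of_forall fun t => ?_)
    ((eventually_gt_atTop 0).mono fun t ht => ae_of_all _
      (norm_indicator_exp_mul_inv_sqrt_smul_le hφ_le hg_le ht))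
    ((integrable_norm_sq_mul_exp_neg_mul_norm_sq μ hc).const_mul |M|)
    (ae_of_all _ hlim)).congr' ?_
  · refine Measurable.aestronglyMeasurable (.comp (.indicator ?_ hS) (by fun_prop))
    fun_prop
  · filter_upwards [eventually_gt_atTop 0] with t ht
    exact (sqrt_pow_mul_mul_setIntegral_exp_mul μ hS φ g ht).symm

end Laplace

section ExpIntegral

theorem integrableOn_Ioi_exp_mul_mul {x y : ℝ} (h : y ≠ 0 → x < 0) :
    IntegrableOn (fun t => rexp (x * t) * y) (Set.Ioi 0) := by
  rcases eq_or_ne y 0 with rfl | hy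
  · simp
  · exact (integrableOn_exp_mul_Ioi (h hy) 0).mul_const y

theorem integral_Ioi_exp_mul_mul {x y : ℝ} (h : y ≠ 0 → x < 0) :
    ∫ t in Set.Ioi 0, rexp (x * t) * y = -(y / x) := by
  rcases eq_or_ne y 0 with rfl | hy
  · simp
  · rw [integral_mul_const, integral_exp_mul_Ioi (h hy), mul_zero, exp_zero]
    ring

variable {α : Type*} [MeasurableSpace α] {μ : Measure α} {φ g : α → ℝ}

theorem integrable_div_of_abs_le_mul_neg [IsFiniteMeasure μ] (hφ : AEStronglyMeasurable φ μ)
    (hg : AEStronglyMeasurable g μ) {K : ℝ} (hle : ∀ᵐ x ∂μ, |g x| ≤ K * -φ x) :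
    Integrable (fun x => g x / φ x) μ := by
  refine .of_bound (hg.aemeasurable.div hφ.aemeasurable).aestronglyMeasurable |K| ?_
  filter_upwards [hle] with x hx
  rw [norm_div]
  refine div_le_of_le_mul₀ (norm_nonneg _) (abs_nonneg _) (hx.trans ?_)
  rw [norm_eq_abs, ← abs_neg (φ x), ← abs_mul]
  exact le_abs_self _

variable [SFinite μ]

theorem integrable_prod_exp_mul_mul (hφ : AEStronglyMeasurable φ μ)
    (hg : AEStronglyMeasurable g μ) (hneg : ∀ᵐ x ∂μ, g x ≠ 0 → φ x < 0)
    (hdiv : Integrable (fun x => g x / φ x) μ) :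
    Integrable (fun p : ℝ × α => rexp (φ p.2 * p.1) * g p.2)
      ((volume.restrict (Set.Ioi 0)).prod μ) := by
  have hmeas : AEStronglyMeasurable (fun p : ℝ × α => rexp (φ p.2 * p.1) * g p.2)
      ((volume.restrict (Set.Ioi 0)).prod μ) :=
    (continuous_exp.comp_aestronglyMeasurable
      (hφ.comp_snd.mul measurable_fst.aestronglyMeasurable)).mul hg.comp_snd
  refine (integrable_prod_iff' hmeas).2
    ⟨hneg.mono fun x hx => integrableOn_Ioi_exp_mul_mul hx, hdiv.norm.congr ?_⟩
  filter_upwards [hneg] with x hx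
  simp only [norm_mul, norm_of_nonneg (exp_pos _).le]
  rw [integral_Ioi_exp_mul_mul (by simpa using hx), norm_div, ← div_neg]
  rcases eq_or_ne (g x) 0 with h0 | h0
  · simp [h0]
  · rw [norm_of_nonpos (hx h0).le]

theorem integral_Ioi_integral_exp_mul_mul (hφ : AEStronglyMeasurable φ μ)
    (hg : AEStronglyMeasurable g μ) (hneg : ∀ᵐ x ∂μ, g x ≠ 0 → φ x < 0)
    (hdiv : Integrable (fun x => g x / φ x) μ) :
    ∫ t in Set.Ioi (0 : ℝ), ∫ x, rexp (φ x * t) * g x ∂μ = -∫ x, g x / φ x ∂μ := by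
  rw [integral_integral_swap (integrable_prod_exp_mul_mul hφ hg hneg hdiv), ← integral_neg]
  exact integral_congr_ae (hneg.mono fun x hx => integral_Ioi_exp_mul_mul hx)

end ExpIntegral

section Symbol

theorem one_sub_cos_add_le (x y : ℝ) :
    1 - cos (x + y) ≤ 2 * (1 - cos x) + 2 * (1 - cos y) := by
  have hhalf : ∀ s : ℝ, 1 - cos s = 2 * sin (s / 2) ^ 2 := fun s => by
    rw [sin_sq_eq_half_sub]
    ring_nf
  rw [hhalf, hhalf, hhalf, add_div, sin_add]
  have hx : (sin (x / 2) * cos (y / 2)) ^ 2 ≤ sin (x / 2) ^ 2 := by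
    rw [mul_pow]
    exact mul_le_of_le_one_right (sq_nonneg _) (cos_sq_le_one _)
  have hy : (cos (x / 2) * sin (y / 2)) ^ 2 ≤ sin (y / 2) ^ 2 := by
    rw [mul_pow]
    exact mul_le_of_le_one_left (sq_nonneg _) (cos_sq_le_one _)
  linarith [add_sq_le (a := sin (x / 2) * cos (y / 2)) (b := cos (x / 2) * sin (y / 2))]

theorem mul_one_sub_cos_inv_sqrt_mul_le {t : ℝ} (ht : 0 < t) (x : ℝ) :
    t * (1 - cos ((√t)⁻¹ * x)) ≤ x ^ 2 / 2 := by
  have hscale : t * ((√t)⁻¹ * x) ^ 2 = x ^ 2 := by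
    rw [mul_pow, inv_pow, sq_sqrt ht.le, mul_inv_cancel_left₀ ht.ne']
  nlinarith [one_sub_sq_div_two_le_cos (x := (√t)⁻¹ * x)]

theorem tendsto_mul_one_sub_cos_inv_sqrt_mul (x : ℝ) :
    Tendsto (fun t : ℝ => t * (1 - cos ((√t)⁻¹ * x))) atTop (𝓝 (x ^ 2 / 2)) := by
  have hzero : Tendsto (fun t : ℝ => (√t)⁻¹ * x / 2) atTop (𝓝 0) := by
    simpa using ((tendsto_inv_atTop_zero.comp tendsto_sqrt_atTop).mul_const x).div_const 2
  have hsinc : Tendsto (fun t : ℝ => sinc ((√t)⁻¹ * x / 2)) atTop (𝓝 1) :=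
    (continuous_sinc.tendsto' 0 1 sinc_zero).comp hzero
  have hlim := (hsinc.pow 2).const_mul (x ^ 2 / 2)
  rw [one_pow, mul_one] at hlim
  refine hlim.congr' ?_
  filter_upwards [eventually_gt_atTop 0] with t ht
  rcases eq_or_ne x 0 with rfl | hx
  · simp
  have hne : (√t)⁻¹ * x / 2 ≠ 0 := by positivity
  have hcos : cos ((√t)⁻¹ * x) = 1 - 2 * sin ((√t)⁻¹ * x / 2) ^ 2 := by
    rw [← cos_two_mul_eq_one_sub, mul_div_cancel₀ _ two_ne_zero]
  rw [sinc_of_ne_zero hne, hcos]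
  field_simp
  rw [sq_sqrt ht.le]
  ring

theorem sum_mul_smul_apply {ι : Type*} [Fintype ι] (x v : ι → ℝ) (s : ℝ) :
    ∑ i, x i * (s • v) i = s * ∑ i, x i * v i := by
  simp only [Finset.mul_sum, Pi.smul_apply, smul_eq_mul, mul_left_comm]

theorem one_sub_cos_sum_mul_le {ι : Type*} [Fintype ι] (x θ : ι → ℝ) :
    1 - cos (∑ i, x i * θ i) ≤ (∑ i, |x i|) ^ 2 / 2 * ‖θ‖ ^ 2 := by
  have habs : |∑ i, x i * θ i| ≤ (∑ i, |x i|) * ‖θ‖ := by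
    rw [Finset.sum_mul]
    refine (Finset.abs_sum_le_sum_abs _ _).trans (Finset.sum_le_sum fun i _ => ?_)
    rw [abs_mul]
    exact mul_le_mul_of_nonneg_left (norm_le_pi_norm θ i) (abs_nonneg _)
  have hsq := sq_le_sq.2 (habs.trans (le_abs_self _))
  rw [mul_pow] at hsq
  linarith [one_sub_sq_div_two_le_cos (x := ∑ i, x i * θ i)]

/-- The cube `[-π, π]^d` over which frequencies are integrated. It is reducible, so that it
unifies with the domain of integration in the definitions above. -/
abbrev brillouinZone (d : ℕ) : Set (Fin d → ℝ) :=
  Set.Icc (fun _ => -π) (fun _ => π)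

instance isFiniteMeasure_restrict_brillouinZone (d : ℕ) :
    IsFiniteMeasure (volume.restrict (brillouinZone d)) :=
  isFiniteMeasure_restrict.2 isCompact_Icc.measure_ne_top

theorem brillouinZone_mem_nhds_zero (d : ℕ) : brillouinZone d ∈ 𝓝 0 :=
  pi_Icc_mem_nhds (fun _ => neg_neg_of_pos pi_pos) fun _ => pi_pos

variable {d : ℕ} {a : (Fin d → ℤ) → ℝ}

theorem summable_mul_cos (ha : Summable a) (θ : Fin d → ℝ) :
    Summable fun z : Fin d → ℤ => a z * cos (∑ i, (z i : ℝ) * θ i) := by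
  refine .of_norm_bounded ha.abs fun z => ?_
  rw [norm_eq_abs, abs_mul]
  exact mul_le_of_le_one_right (abs_nonneg _) (abs_cos_le_one _)

theorem continuous_phiSymb (ha : Summable a) : Continuous (phiSymb d a) := by
  refine continuous_tsum (fun z => by fun_prop) ha.abs fun z θ => ?_
  rw [norm_eq_abs, abs_mul]
  exact mul_le_of_le_one_right (abs_nonneg _) (abs_cos_le_one _)

theorem hasSum_neg_phiSymb (hsum : HasSum a 0) (θ : Fin d → ℝ) :
    HasSum (fun z : Fin d → ℤ => a z * (1 - cos (∑ i, (z i : ℝ) * θ i))) (-phiSymb d a θ) := by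
  simpa only [mul_sub, mul_one, zero_sub, phiSymb]
    using hsum.sub (summable_mul_cos hsum.summable θ).hasSum

theorem mul_one_sub_cos_nonneg (hpos : ∀ z : Fin d → ℤ, z ≠ 0 → 0 ≤ a z) (z : Fin d → ℤ)
    (θ : Fin d → ℝ) : 0 ≤ a z * (1 - cos (∑ i, (z i : ℝ) * θ i)) := by
  rcases eq_or_ne z 0 with rfl | hz
  · simp
  · exact mul_nonneg (hpos z hz) (sub_nonneg.2 (cos_le_one _))

theorem phiSymb_nonpos (hpos : ∀ z : Fin d → ℤ, z ≠ 0 → 0 ≤ a z) (hsum : HasSum a 0)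
    (θ : Fin d → ℝ) : phiSymb d a θ ≤ 0 :=
  neg_nonneg.1 ((hasSum_neg_phiSymb hsum θ).nonneg fun z => mul_one_sub_cos_nonneg hpos z θ)

/-- The set of `z` admitting such a bound is a subgroup: closure under addition is the inequality
`1 - cos (x + y) ≤ 2 (1 - cos x) + 2 (1 - cos y)`. -/
theorem exists_one_sub_cos_le_mul_neg_phiSymb (hpos : ∀ z : Fin d → ℤ, z ≠ 0 → 0 ≤ a z)
    (hsum : HasSum a 0) {z : Fin d → ℤ} (hz : z ∈ AddSubgroup.closure {z | 0 < a z}) :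
    ∃ C : ℝ, ∀ θ : Fin d → ℝ, 1 - cos (∑ i, (z i : ℝ) * θ i) ≤ C * -phiSymb d a θ := by
  induction hz using AddSubgroup.closure_induction with
  | mem z hz =>
    refine ⟨(a z)⁻¹, fun θ => ?_⟩
    rw [← div_eq_inv_mul, le_div_iff₀ hz, mul_comm]
    exact le_hasSum (hasSum_neg_phiSymb hsum θ) z fun w _ => mul_one_sub_cos_nonneg hpos w θ
  | zero => exact ⟨0, fun θ => by simp⟩
  | add x y _ _ hx hy =>
    obtain ⟨C, hC⟩ := hx
    obtain ⟨D, hD⟩ := hy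
    refine ⟨2 * C + 2 * D, fun θ => ?_⟩
    have hadd := one_sub_cos_add_le (∑ i, (x i : ℝ) * θ i) (∑ i, (y i : ℝ) * θ i)
    simp only [Pi.add_apply, Int.cast_add, add_mul, Finset.sum_add_distrib]
    linarith [hC θ, hD θ]
  | neg x _ hx =>
    obtain ⟨C, hC⟩ := hx
    exact ⟨C, fun θ => by simpa using hC θ⟩

theorem mul_sq_le_one_sub_cos {x : ℝ} (hx : |x| ≤ π) : 2 / π ^ 2 * x ^ 2 ≤ 1 - cos x := by
  linarith [cos_le_one_sub_mul_cos_sq hx]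

theorem exists_mul_norm_sq_le_neg_phiSymb (hpos : ∀ z : Fin d → ℤ, z ≠ 0 → 0 ≤ a z)
    (hsum : HasSum a 0) (hirr : AddSubgroup.closure {z : Fin d → ℤ | 0 < a z} = ⊤) :
    ∃ c > 0, ∀ θ ∈ brillouinZone d, c * ‖θ‖ ^ 2 ≤ -phiSymb d a θ := by
  choose C hC using fun i : Fin d =>
    exists_one_sub_cos_le_mul_neg_phiSymb hpos hsum (hirr ▸ AddSubgroup.mem_top (Pi.single i 1))
  set S : ℝ := 1 + ∑ i, |C i|
  have hS : 0 < S := by positivity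
  refine ⟨2 / π ^ 2 / S, div_pos (by positivity) hS, fun θ hθ => ?_⟩
  have hφ : 0 ≤ -phiSymb d a θ := neg_nonneg.2 (phiSymb_nonpos hpos hsum θ)
  have hcoord : ∀ i, θ i ^ 2 ≤ π ^ 2 / 2 * (S * -phiSymb d a θ) := fun i => by
    have hcos : 1 - cos (θ i) ≤ C i * -phiSymb d a θ := by
      simpa [Pi.single_apply] using hC i θ
    have hCS : C i ≤ S := (le_abs_self _).trans <|
      (Finset.single_le_sum (fun j _ => abs_nonneg (C j)) (Finset.mem_univ i)).trans
        (le_add_of_nonneg_left zero_le_one)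
    have hsq := (mul_sq_le_one_sub_cos (abs_le.2 ⟨hθ.1 i, hθ.2 i⟩)).trans
      (hcos.trans (mul_le_mul_of_nonneg_right hCS hφ))
    rwa [← inv_div, inv_mul_le_iff₀ (by positivity)] at hsq
  have hnorm : ‖θ‖ ^ 2 ≤ π ^ 2 / 2 * (S * -phiSymb d a θ) :=
    (le_sqrt (norm_nonneg _) (by positivity)).1
      ((pi_norm_le_iff_of_nonneg (sqrt_nonneg _)).2 fun i => abs_le_sqrt (hcoord i))
  rwa [div_div, ← inv_div, inv_mul_le_iff₀ (by positivity), mul_div_right_comm, mul_assoc]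

theorem summable_mul_mul (hpos : ∀ z : Fin d → ℤ, z ≠ 0 → 0 ≤ a z)
    (hvar : Summable fun z : Fin d → ℤ => (∑ i, (z i : ℝ) ^ 2) * a z) (i j : Fin d) :
    Summable fun z : Fin d → ℤ => a z * (z i : ℝ) * (z j : ℝ) := by
  refine .of_norm_bounded hvar fun z => ?_
  rcases eq_or_ne z 0 with rfl | hz
  · simp
  have hle : ∀ k, (z k : ℝ) ^ 2 ≤ ∑ k, (z k : ℝ) ^ 2 := fun k =>
    Finset.single_le_sum (f := fun k => (z k : ℝ) ^ 2) (fun k _ => sq_nonneg _) (Finset.mem_univ k)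
  have hij : |(z i : ℝ)| * |(z j : ℝ)| ≤ ∑ k, (z k : ℝ) ^ 2 := by
    have := two_mul_le_add_sq |(z i : ℝ)| |(z j : ℝ)|
    rw [sq_abs, sq_abs] at this
    linarith [hle i, hle j]
  rw [norm_eq_abs, abs_mul, abs_mul, abs_of_nonneg (hpos z hz), mul_assoc, mul_comm]
  exact mul_le_mul_of_nonneg_right hij (hpos z hz)

theorem hasSum_mul_sq_hessPhi (hpos : ∀ z : Fin d → ℤ, z ≠ 0 → 0 ≤ a z)
    (hvar : Summable fun z : Fin d → ℤ => (∑ i, (z i : ℝ) ^ 2) * a z) (v : Fin d → ℝ) :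
    HasSum (fun z : Fin d → ℤ => a z * (∑ i, (z i : ℝ) * v i) ^ 2)
      (-∑ i, (hessPhi d a).mulVec v i * v i) := by
  have h : HasSum (fun z : Fin d → ℤ => ∑ i, ∑ j, a z * (z i : ℝ) * (z j : ℝ) * (v j * v i))
      (∑ i, ∑ j, (∑' z : Fin d → ℤ, a z * (z i : ℝ) * (z j : ℝ)) * (v j * v i)) :=
    hasSum_sum fun i _ => hasSum_sum fun j _ =>
      (summable_mul_mul hpos hvar i j).hasSum.mul_right _
  convert h using 1
  · funext z
    rw [sq, Finset.sum_mul_sum, Finset.mul_sum]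
    refine Finset.sum_congr rfl fun i _ => ?_
    rw [Finset.mul_sum]
    exact Finset.sum_congr rfl fun j _ => by ring
  · simp only [Matrix.mulVec, dotProduct, hessPhi, Matrix.of_apply, neg_mul,
      Finset.sum_neg_distrib, neg_neg, Finset.sum_mul, mul_assoc]

theorem tendsto_mul_phiSymb (hpos : ∀ z : Fin d → ℤ, z ≠ 0 → 0 ≤ a z) (hsum : HasSum a 0)
    (hvar : Summable fun z : Fin d → ℤ => (∑ i, (z i : ℝ) ^ 2) * a z) (v : Fin d → ℝ) :
    Tendsto (fun t : ℝ => t * phiSymb d a ((√t)⁻¹ • v)) atTop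
      (𝓝 ((∑ i, (hessPhi d a).mulVec v i * v i) / 2)) := by
  have hQ : HasSum (fun z : Fin d → ℤ => a z * ((∑ i, (z i : ℝ) * v i) ^ 2 / 2))
      (-((∑ i, (hessPhi d a).mulVec v i * v i) / 2)) := by
    simpa only [neg_div, mul_div_assoc] using (hasSum_mul_sq_hessPhi hpos hvar v).div_const 2
  have hφ (t : ℝ) : HasSum (fun z : Fin d → ℤ =>
      a z * (t * (1 - cos ((√t)⁻¹ * ∑ i, (z i : ℝ) * v i)))) (-(t * phiSymb d a ((√t)⁻¹ • v))) := by
    simpa only [sum_mul_smul_apply, mul_left_comm t, mul_neg]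
      using (hasSum_neg_phiSymb hsum ((√t)⁻¹ • v)).mul_left t
  have hlim : Tendsto (fun t : ℝ => ∑' z : Fin d → ℤ,
      a z * (t * (1 - cos ((√t)⁻¹ * ∑ i, (z i : ℝ) * v i)))) atTop
      (𝓝 (∑' z : Fin d → ℤ, a z * ((∑ i, (z i : ℝ) * v i) ^ 2 / 2))) := by
    refine tendsto_tsum_of_dominated_convergence hQ.summable
      (fun z => (tendsto_mul_one_sub_cos_inv_sqrt_mul _).const_mul _) ?_
    filter_upwards [eventually_gt_atTop 0] with t ht z
    rcases eq_or_ne z 0 with rfl | hz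
    · simp
    rw [norm_of_nonneg (mul_nonneg (hpos z hz) (mul_nonneg ht.le (sub_nonneg.2 (cos_le_one _))))]
    exact mul_le_mul_of_nonneg_left (mul_one_sub_cos_inv_sqrt_mul_le ht _) (hpos z hz)
  simpa only [(hφ _).tsum_eq, hQ.tsum_eq, neg_neg] using hlim.neg

end Symbol

section Green

variable {d : ℕ} {a : (Fin d → ℤ) → ℝ}

theorem ptrans_zero_left (t : ℝ) (y : Fin d → ℤ) :
    ptrans d a t 0 y = ((2 * π) ^ d)⁻¹ *
      ∫ θ in brillouinZone d, rexp (phiSymb d a θ * t) * cos (∑ i, (y i : ℝ) * θ i) := by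
  simp only [ptrans, Pi.zero_apply, Int.cast_zero, sub_zero, mul_comm]

theorem ptrans_zero_sub_ptrans (ha : Summable a) (r : Fin d → ℤ) (t : ℝ) :
    ptrans d a t 0 0 - ptrans d a t 0 r = ((2 * π) ^ d)⁻¹ *
      ∫ θ in brillouinZone d, rexp (phiSymb d a θ * t) * (1 - cos (∑ i, (r i : ℝ) * θ i)) := by
  have hint (y : Fin d → ℤ) : IntegrableOn
      (fun θ => rexp (phiSymb d a θ * t) * cos (∑ i, (y i : ℝ) * θ i)) (brillouinZone d) := by
    have hφ := continuous_phiSymb ha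
    exact Continuous.integrableOn_Icc (by fun_prop)
  rw [ptrans_zero_left, ptrans_zero_left, ← mul_sub, ← integral_sub (hint 0) (hint r)]
  simp only [Pi.zero_apply, Int.cast_zero, zero_mul, Finset.sum_const_zero, cos_zero, mul_sub]

theorem exp_neg_mul_mul_ptrans_zero_left (lam t : ℝ) (y : Fin d → ℤ) :
    rexp (-lam * t) * ptrans d a t 0 y = ((2 * π) ^ d)⁻¹ *
      ∫ θ in brillouinZone d,
        rexp ((phiSymb d a θ - lam) * t) * cos (∑ i, (y i : ℝ) * θ i) := by
  simp only [ptrans_zero_left, sub_eq_neg_add, add_mul, exp_add, mul_assoc, integral_const_mul,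
    mul_left_comm (rexp _) (((2 * π) ^ d)⁻¹)]

theorem integrableOn_exp_neg_mul_ptrans (hpos : ∀ z : Fin d → ℤ, z ≠ 0 → 0 ≤ a z)
    (hsum : HasSum a 0) (y : Fin d → ℤ) {lam : ℝ} (hlam : 0 < lam) :
    IntegrableOn (fun t => rexp (-lam * t) * ptrans d a t 0 y) (Set.Ioi 0) := by
  have hφ : Continuous fun θ => phiSymb d a θ - lam :=
    (continuous_phiSymb hsum.summable).sub continuous_const
  have hcos : Continuous fun θ : Fin d → ℝ => cos (∑ i, (y i : ℝ) * θ i) := by fun_prop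
  have hφ_le : ∀ θ, lam ≤ -(phiSymb d a θ - lam) := fun θ => by
    linarith [phiSymb_nonpos hpos hsum θ]
  have hdom : ∀ θ : Fin d → ℝ,
      |cos (∑ i, (y i : ℝ) * θ i)| ≤ lam⁻¹ * -(phiSymb d a θ - lam) := fun θ => by
    refine (abs_cos_le_one _).trans ?_
    rw [← inv_mul_cancel₀ hlam.ne']
    exact mul_le_mul_of_nonneg_left (hφ_le θ) (inv_nonneg.2 hlam.le)
  have hprod := integrable_prod_exp_mul_mul (μ := volume.restrict (brillouinZone d))
    hφ.aestronglyMeasurable hcos.aestronglyMeasurable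
    (.of_forall fun θ _ => by linarith [hφ_le θ])
    (integrable_div_of_abs_le_mul_neg hφ.aestronglyMeasurable hcos.aestronglyMeasurable
      (.of_forall hdom))
  simp only [exp_neg_mul_mul_ptrans_zero_left]
  exact hprod.integral_prod_left.const_mul _

theorem phiSymb_neg_of_one_sub_cos_ne_zero (hpos : ∀ z : Fin d → ℤ, z ≠ 0 → 0 ≤ a z)
    (hsum : HasSum a 0) {r : Fin d → ℤ} (hr : r ∈ AddSubgroup.closure {z | 0 < a z})
    {θ : Fin d → ℝ} (hθ : 1 - cos (∑ i, (r i : ℝ) * θ i) ≠ 0) : phiSymb d a θ < 0 := by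
  obtain ⟨C, hC⟩ := exists_one_sub_cos_le_mul_neg_phiSymb hpos hsum hr
  refine (phiSymb_nonpos hpos hsum θ).lt_of_ne fun h0 => hθ ?_
  have hle := hC θ
  rw [h0, neg_zero, mul_zero] at hle
  exact hle.antisymm (sub_nonneg.2 (cos_le_one _))

theorem integrableOn_one_sub_cos_div_phiSymb (hpos : ∀ z : Fin d → ℤ, z ≠ 0 → 0 ≤ a z)
    (hsum : HasSum a 0) {r : Fin d → ℤ} (hr : r ∈ AddSubgroup.closure {z | 0 < a z}) :
    IntegrableOn (fun θ => (1 - cos (∑ i, (r i : ℝ) * θ i)) / phiSymb d a θ)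
      (brillouinZone d) := by
  obtain ⟨C, hC⟩ := exists_one_sub_cos_le_mul_neg_phiSymb hpos hsum hr
  refine integrable_div_of_abs_le_mul_neg (K := C)
    (continuous_phiSymb hsum.summable).aestronglyMeasurable
    (by fun_prop : Continuous _).aestronglyMeasurable (.of_forall fun θ => ?_)
  rw [abs_of_nonneg (sub_nonneg.2 (cos_le_one _))]
  exact hC θ

theorem integrableOn_ptrans_zero_sub_ptrans (hpos : ∀ z : Fin d → ℤ, z ≠ 0 → 0 ≤ a z)
    (hsum : HasSum a 0) {r : Fin d → ℤ} (hr : r ∈ AddSubgroup.closure {z | 0 < a z}) :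
    IntegrableOn (fun t => ptrans d a t 0 0 - ptrans d a t 0 r) (Set.Ioi 0) := by
  simp only [ptrans_zero_sub_ptrans hsum.summable]
  exact (integrable_prod_exp_mul_mul (continuous_phiSymb hsum.summable).aestronglyMeasurable
    (by fun_prop : Continuous _).aestronglyMeasurable
    (.of_forall fun θ => phiSymb_neg_of_one_sub_cos_ne_zero hpos hsum hr)
    (integrableOn_one_sub_cos_div_phiSymb hpos hsum hr)).integral_prod_left.const_mul _

theorem integral_ptrans_zero_sub_ptrans (hpos : ∀ z : Fin d → ℤ, z ≠ 0 → 0 ≤ a z)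
    (hsum : HasSum a 0) (ha0 : a 0 ≠ 0) {r : Fin d → ℤ} (hr0 : r ≠ 0)
    (hr : r ∈ AddSubgroup.closure {z | 0 < a z}) :
    ∫ t in Set.Ioi 0, (ptrans d a t 0 0 - ptrans d a t 0 r) = rhoConst d a r / -a 0 := by
  simp only [ptrans_zero_sub_ptrans hsum.summable]
  rw [integral_const_mul, integral_Ioi_integral_exp_mul_mul
    (continuous_phiSymb hsum.summable).aestronglyMeasurable
    (by fun_prop : Continuous _).aestronglyMeasurable
    (.of_forall fun θ => phiSymb_neg_of_one_sub_cos_ne_zero hpos hsum hr)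
    (integrableOn_one_sub_cos_div_phiSymb hpos hsum hr), rhoConst, if_neg hr0, ← integral_neg]
  simp only [← neg_div, neg_sub]
  field_simp

theorem Glam_zero_sub_Glam (hpos : ∀ z : Fin d → ℤ, z ≠ 0 → 0 ≤ a z)
    (hsum : HasSum a 0) (ha0 : a 0 ≠ 0) {r : Fin d → ℤ} (hr0 : r ≠ 0)
    (hr : r ∈ AddSubgroup.closure {z | 0 < a z}) {lam : ℝ} (hlam : 0 < lam) :
    Glam d a lam 0 0 - Glam d a lam 0 r = rhoConst d a r / -a 0
      - ∫ t in Set.Ioi 0, (1 - rexp (-lam * t)) * (ptrans d a t 0 0 - ptrans d a t 0 r) := by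
  have hdrop := integrableOn_ptrans_zero_sub_ptrans hpos hsum hr
  rw [Glam, Glam, ← integral_ptrans_zero_sub_ptrans hpos hsum ha0 hr0 hr,
    ← integral_sub (integrableOn_exp_neg_mul_ptrans hpos hsum 0 hlam)
      (integrableOn_exp_neg_mul_ptrans hpos hsum r hlam),
    ← integral_sub hdrop
      (integrableOn_one_sub_exp_mul measurableSet_Ioi subset_rfl hdrop hlam.le)]
  congr 1 with t
  ring

theorem gammaTilde_eq (r : Fin d → ℤ) :
    gammaTilde d a r = ((2 * π) ^ d)⁻¹ * ∫ v : Fin d → ℝ,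
      rexp ((∑ i, (hessPhi d a).mulVec v i * v i) / 2) * ((∑ i, (r i : ℝ) * v i) ^ 2 / 2) := by
  rw [gammaTilde, mul_inv, mul_comm (2⁻¹ : ℝ), mul_assoc, ← integral_const_mul]
  congr 2 with v
  simp only [mul_comm (v _)]
  ring

theorem tendsto_sqrt_pow_mul_mul_ptrans_zero_sub_ptrans
    (hpos : ∀ z : Fin d → ℤ, z ≠ 0 → 0 ≤ a z) (hsum : HasSum a 0)
    (hvar : Summable fun z : Fin d → ℤ => (∑ i, (z i : ℝ) ^ 2) * a z)
    (hirr : AddSubgroup.closure {z : Fin d → ℤ | 0 < a z} = ⊤) (r : Fin d → ℤ) :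
    Tendsto (fun t => √t ^ d * t * (ptrans d a t 0 0 - ptrans d a t 0 r)) atTop
      (𝓝 (gammaTilde d a r)) := by
  obtain ⟨c, hc, hcoer⟩ := exists_mul_norm_sq_le_neg_phiSymb hpos hsum hirr
  have hcos_le : ∀ θ : Fin d → ℝ, |1 - cos (∑ i, (r i : ℝ) * θ i)|
      ≤ (∑ i, |(r i : ℝ)|) ^ 2 / 2 * ‖θ‖ ^ 2 := fun θ => by
    rw [abs_of_nonneg (sub_nonneg.2 (cos_le_one _))]
    exact one_sub_cos_sum_mul_le _ θ
  have hcos_lim : ∀ v : Fin d → ℝ, Tendsto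
      (fun t : ℝ => t * (1 - cos (∑ i, (r i : ℝ) * ((√t)⁻¹ • v) i))) atTop
      (𝓝 ((∑ i, (r i : ℝ) * v i) ^ 2 / 2)) := fun v => by
    simpa only [sum_mul_smul_apply] using tendsto_mul_one_sub_cos_inv_sqrt_mul _
  have hlim := (tendsto_sqrt_pow_mul_mul_setIntegral_exp_mul volume measurableSet_Icc
    (brillouinZone_mem_nhds_zero d) (continuous_phiSymb hsum.summable).measurable (by fun_prop) hc
    hcoer (fun θ _ => hcos_le θ) (tendsto_mul_phiSymb hpos hsum hvar) hcos_lim).const_mul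
    ((2 * π) ^ d)⁻¹
  rw [gammaTilde_eq]
  refine hlim.congr fun t => ?_
  rw [ptrans_zero_sub_ptrans hsum.summable, Module.finrank_fin_fun, mul_left_comm]

end Green

theorem Glam_diff_expansion_d2_general
    (a : (Fin 2 → ℤ) → ℝ)
    (hpos : ∀ z : Fin 2 → ℤ, z ≠ 0 → 0 ≤ a z)
    (hneg : a 0 < 0)
    (hsum : HasSum a 0)
    (hvar : Summable fun z : Fin 2 → ℤ => (∑ i, ((z i : ℝ)) ^ 2) * a z)
    (hirr : AddSubgroup.closure {z : Fin 2 → ℤ | 0 < a z} = ⊤)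
    (r : Fin 2 → ℤ) (hr : r ≠ 0) :
    (fun lam : ℝ => Glam 2 a lam 0 0 - Glam 2 a lam 0 r -
        (rhoConst 2 a r / (-(a 0)) + gammaTilde 2 a r * (lam * Real.log lam)))
      =o[𝓝[>] (0 : ℝ)] fun lam : ℝ => lam * Real.log lam := by
  have hr_mem : r ∈ AddSubgroup.closure {z | 0 < a z} := hirr ▸ AddSubgroup.mem_top r
  have hdrop_tendsto : Tendsto (fun t => t ^ 2 * (ptrans 2 a t 0 0 - ptrans 2 a t 0 r)) atTop
      (𝓝 (gammaTilde 2 a r)) := by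
    refine (tendsto_sqrt_pow_mul_mul_ptrans_zero_sub_ptrans hpos hsum hvar hirr r).congr' ?_
    filter_upwards [eventually_ge_atTop 0] with t ht
    rw [sq_sqrt ht, ← sq]
  refine (isLittleO_integral_one_sub_exp_mul_add
    (integrableOn_ptrans_zero_sub_ptrans hpos hsum hr_mem) hdrop_tendsto).neg_left.congr' ?_ .rfl
  filter_upwards [self_mem_nhdsWithin] with lam hlam
  rw [Glam_zero_sub_Glam hpos hsum hneg.ne hr hr_mem hlam]
  ring

/-- For `d = 2` and `r ≠ 0`:
`G_λ(0,0) - G_λ(0,r) = ρ₂(r)/a + γ̃₂(r) λ ln λ + o(λ ln λ)` as `λ → 0+`. -/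
theorem Glam_diff_expansion_d2
    (a : (Fin 2 → ℤ) → ℝ)
    (hpos : ∀ z : Fin 2 → ℤ, z ≠ 0 → 0 ≤ a z)
    (hneg : a 0 < 0)
    (hsymm : ∀ z : Fin 2 → ℤ, a (-z) = a z)
    (hsum : HasSum a 0)
    (hvar : Summable fun z : Fin 2 → ℤ => (∑ i, ((z i : ℝ)) ^ 2) * a z)
    (hirr : AddSubgroup.closure {z : Fin 2 → ℤ | 0 < a z} = ⊤)
    (r : Fin 2 → ℤ) (hr : r ≠ 0) :
    (fun lam : ℝ => Glam 2 a lam 0 0 - Glam 2 a lam 0 r -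
        (rhoConst 2 a r / (-(a 0)) + gammaTilde 2 a r * (lam * Real.log lam)))
      =o[𝓝[>] (0 : ℝ)] fun lam : ℝ => lam * Real.log lam :=
  Glam_diff_expansion_d2_general a hpos hneg hsum hvar hirr r hr
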